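/- arXiv:1802.05309 — 2 statements merged into one kernel-verified Lean document; each statement's English description precedes it below -/
import Mathlib

section
/- Let {u_n} be a linear recurrence sequence of complex numbers and c ∈ ℂ. Then the set {n ∈ ℕ₀ : u_n = c} is a finite union of arithmetic progressions (where singletons count as arithmetic progressions). -/
/-- An arithmetic progression `{a*k + b : k ∈ ℕ₀}`; a singleton when `a = 0`. -/
def IsArithProg (S : Set ℕ) : Prop :=
  ∃ a b : ℕ, S = {x : ℕ | ∃ k : ℕ, x = a * k + b}

/-!
Subtracting the constant gives again a recurrent sequence, so only the zeros of `u` matter, and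
after a shift the last coefficient of the recurrence is nonzero. The ring generated by the finitely
many data of the recurrence embeds, for a suitable prime `p`, into a finite extension `O` of `ℤ_p`
in such a way that the last coefficient becomes a unit (Lech, Cassels): specialise a transcendence
basis to algebraically independent `p`-adic integers that reduce modulo `p` to a point where a
common denominator does not vanish. Then `u n = l (x ^ n)` for an additive map `l` and a unit `x` of
a finite `ℤ_p`-algebra. Some power of `x` has the form `x ^ N = 1 + p² B`, so that
`u (r + N n) = ∑ₖ (n choose k) p²ᵏ l (x ^ r * B ^ k)`.

Since `k! ∣ p ^ k`, the sum truncated at `k ≤ M` is a polynomial in `p n` with coefficients in `O`.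
If it vanishes at `t` different values of `n`, all its values at multiples of `p` are divisible by
`p ^ t`. Hence a sum with infinitely many zeros vanishes identically, and on each class modulo `N`
the zero set is finite or everything.
-/

open Polynomial

section Interpolation

variable {R : Type*} [CommRing R]

lemma pow_card_dvd_eval_mul [IsDomain R] {π : R} (hπ : π ≠ 0) {G : R[X]} {S : Finset R}
    (hS : ∀ a ∈ S, G.eval (π * a) = 0) (x : R) : π ^ S.card ∣ G.eval (π * x) := by
  rcases eq_or_ne G 0 with rfl | hG
  · simp
  have hprod : ∏ a ∈ S, (X - C (π * a)) ∣ G := by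
    have hle : S.val.map (π * ·) ≤ G.roots := by
      rw [Multiset.le_iff_subset (S.nodup.map (mul_right_injective₀ hπ))]
      intro y hy
      obtain ⟨a, ha, rfl⟩ := Multiset.mem_map.mp hy
      exact (mem_roots hG).mpr (hS a ha)
    have hdvd := (Multiset.prod_X_sub_C_dvd_iff_le_roots hG _).mpr hle
    rwa [Multiset.map_map] at hdvd
  calc π ^ S.card ∣ ∏ a ∈ S, (π * x - π * a) := by
        simp only [← mul_sub, Finset.prod_mul_distrib, Finset.prod_const, dvd_mul_right]
    _ = (∏ a ∈ S, (X - C (π * a))).eval (π * x) := by simp [eval_prod]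
    _ ∣ G.eval (π * x) := eval_dvd hprod

lemma prod_range_mul_sub_mul (π : R) (n k : ℕ) :
    ∏ j ∈ Finset.range k, (π * n - π * j) = π ^ k * (k.factorial * n.choose k) := by
  simp only [← mul_sub, Finset.prod_mul_distrib, Finset.prod_const, Finset.card_range]
  rw [← descPochhammer_eval_eq_prod_range, descPochhammer_eval_eq_descFactorial,
    Nat.descFactorial_eq_factorial_mul_choose, Nat.cast_mul]

lemma exists_eval_mul_eq_sum_choose {π : R} (hπ : ∀ k : ℕ, (k.factorial : R) ∣ π ^ k)
    (b : ℕ → R) (M : ℕ) :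
    ∃ G : R[X], ∀ n ≤ M, G.eval (π * n) =
      ∑ k ∈ Finset.range (n + 1), n.choose k * (π ^ 2) ^ k * b k := by
  choose e he using hπ
  refine ⟨∑ k ∈ Finset.range (M + 1),
    C (e k * b k) * ∏ j ∈ Finset.range k, (X - C (π * j)), fun n hn ↦ ?_⟩
  have hterm (k : ℕ) : (C (e k * b k) * ∏ j ∈ Finset.range k, (X - C (π * j))).eval (π * n) =
      n.choose k * (π ^ 2) ^ k * b k := by
    rw [eval_mul, eval_prod]
    simp only [eval_C, eval_sub, eval_X]
    rw [prod_range_mul_sub_mul, ← pow_mul, mul_comm 2, pow_mul, sq]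
    nth_rewrite 3 [he k]
    ring
  simp only [eval_finsetSum, hterm]
  refine (Finset.sum_subset (Finset.range_mono (by lia)) fun k _ hk ↦ ?_).symm
  rw [Nat.choose_eq_zero_of_lt (by simpa using hk)]
  simp

lemma sum_choose_eq_zero_of_infinite [IsDomain R] [CharZero R] {π : R} (hπ : π ≠ 0)
    [IsHausdorff (Ideal.span {π}) R] (hfac : ∀ k : ℕ, (k.factorial : R) ∣ π ^ k) (b : ℕ → R)
    (hinf : {n : ℕ | ∑ k ∈ Finset.range (n + 1), n.choose k * (π ^ 2) ^ k * b k = 0}.Infinite)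
    (n : ℕ) : ∑ k ∈ Finset.range (n + 1), n.choose k * (π ^ 2) ^ k * b k = 0 := by
  refine IsHausdorff.haus ‹_› _ fun t ↦ ?_
  rw [SModEq.zero, smul_eq_mul, Ideal.mul_top, Ideal.span_singleton_pow,
    Ideal.mem_span_singleton]
  obtain ⟨S, hS, rfl⟩ := hinf.exists_subset_card_eq t
  obtain ⟨G, hG⟩ := exists_eval_mul_eq_sum_choose hfac b (n + S.sup id)
  have hroot : ∀ a ∈ S.map Nat.castEmbedding, G.eval (π * a) = 0 := by
    intro a ha
    obtain ⟨j, hj, rfl⟩ := Finset.mem_map.mp ha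
    have hjM : j ≤ n + S.sup id := (Finset.le_sup (f := id) hj).trans (Nat.le_add_left _ _)
    exact (hG j hjM).trans (hS hj)
  have hdvd := pow_card_dvd_eval_mul hπ hroot n
  rwa [Finset.card_map, hG n (Nat.le_add_right _ _)] at hdvd

end Interpolation

section PadicInt

variable (p : ℕ) [Fact p.Prime]

lemma factorial_dvd_prime_pow_padicInt (k : ℕ) : (k.factorial : ℤ_[p]) ∣ (p : ℤ_[p]) ^ k := by
  have hk : (k.factorial : ℤ_[p]) ≠ 0 := mod_cast k.factorial_ne_zero
  have hval : (k.factorial : ℤ_[p]).valuation = padicValNat p k.factorial := by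
    have h := PadicInt.valuation_coe (p := p) (k.factorial : ℤ_[p])
    rw [PadicInt.coe_natCast, Padic.valuation_natCast] at h
    exact_mod_cast h.symm
  rw [PadicInt.unitCoeff_spec hk, Units.mul_left_dvd, hval]
  exact pow_dvd_pow _ (padicValNat_factorial_le (p := p) k)

variable (T : Type*) [CommRing T] [Algebra ℤ_[p] T]

lemma factorial_dvd_prime_pow (k : ℕ) : (k.factorial : T) ∣ (p : T) ^ k := by
  simpa using map_dvd (algebraMap ℤ_[p] T) (factorial_dvd_prime_pow_padicInt p k)

variable [Module.Finite ℤ_[p] T]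

lemma isHausdorff_span_prime : IsHausdorff (Ideal.span {(p : T)}) T := by
  have hbase : IsHausdorff (Ideal.span {(p : ℤ_[p])}) T := by
    rw [← PadicInt.maximalIdeal_eq_span_p]
    infer_instance
  have hmap := (IsHausdorff.map_algebraMap_iff (S := T) (M := T)).mpr hbase
  simpa [Ideal.map_span] using hmap

lemma finite_quotient_span_prime_pow (n : ℕ) : Finite (T ⧸ Ideal.span {(p : T) ^ n}) := by
  let I : Ideal ℤ_[p] := Ideal.span {(p : ℤ_[p]) ^ n}
  have hI : Finite (ℤ_[p] ⧸ I) := by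
    have : NeZero (p ^ n) := ⟨pow_ne_zero _ (Fact.out : p.Prime).ne_zero⟩
    rw [show I = _ from (PadicInt.ker_toZModPow n).symm]
    exact Finite.of_injective _ (RingHom.kerLift_injective (PadicInt.toZModPow (p := p) n))
  have hIT : I.map (algebraMap ℤ_[p] T) = Ideal.span {(p : T) ^ n} := by
    simp [I, Ideal.map_span]
  rw [← hIT]
  have : Module.Finite (ℤ_[p] ⧸ I) (T ⧸ I.map (algebraMap ℤ_[p] T)) :=
    .of_restrictScalars_finite ℤ_[p] _ _
  exact Module.finite_of_finite (ℤ_[p] ⧸ I)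

variable {T}

lemma exists_pow_eq_one_add_prime_pow_mul {x : T} (hx : IsUnit x) (n : ℕ) :
    ∃ N > 0, ∃ B, x ^ N = 1 + (p : T) ^ n * B := by
  have := finite_quotient_span_prime_pow p T n
  let q := Ideal.Quotient.mk (Ideal.span {(p : T) ^ n})
  obtain ⟨N, hN, hpow⟩ := (isOfFinOrder_of_finite (hx.map q).unit).exists_pow_eq_one
  have hq : q (x ^ N) = q 1 := by
    simpa [Units.ext_iff] using hpow
  obtain ⟨B, hB⟩ := Ideal.mem_span_singleton.mp (Ideal.Quotient.eq.mp hq)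
  exact ⟨N, hN, B, by rw [← hB]; ring⟩

end PadicInt

/-- For `N > 0`, the set `Z` meets every residue class modulo `N` in a finite set or in the whole
class. The classes `{r + N * n | n ∈ ℕ}` are taken for all `r`, not only for `r < N`. -/
def SplitsModulo (N : ℕ) (Z : Set ℕ) : Prop :=
  ∀ r, {n | r + N * n ∈ Z}.Infinite → ∀ n, r + N * n ∈ Z

lemma exists_splitsModulo_addMonoidHom_pow (p : ℕ) [Fact p.Prime] (O : Type*) [CommRing O]
    [IsDomain O] [CharZero O] [Algebra ℤ_[p] O] [Module.Finite ℤ_[p] O] {T : Type*} [CommRing T]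
    [Algebra ℤ_[p] T] [Module.Finite ℤ_[p] T] {x : T} (hx : IsUnit x) :
    ∃ N > 0, ∀ l : T →+ O, SplitsModulo N {n | l (x ^ n) = 0} := by
  have := isHausdorff_span_prime p O
  have hp : (p : O) ≠ 0 := mod_cast (Fact.out : p.Prime).ne_zero
  obtain ⟨N, hN, B, hB⟩ := exists_pow_eq_one_add_prime_pow_mul p hx 2
  refine ⟨N, hN, fun l r ↦ ?_⟩
  have hexpand (n : ℕ) : l (x ^ (r + N * n)) =
      ∑ k ∈ Finset.range (n + 1), n.choose k * ((p : O) ^ 2) ^ k * l (x ^ r * B ^ k) := by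
    have hpow : x ^ (r + N * n) =
        ∑ k ∈ Finset.range (n + 1), (n.choose k * (p ^ 2) ^ k) • (x ^ r * B ^ k) := by
      rw [pow_add, pow_mul, hB, add_comm 1, add_pow, Finset.mul_sum]
      refine Finset.sum_congr rfl fun k _ ↦ ?_
      rw [nsmul_eq_mul]
      push_cast
      ring
    rw [hpow, map_sum]
    refine Finset.sum_congr rfl fun k _ ↦ ?_
    rw [map_nsmul, nsmul_eq_mul]
    push_cast
    ring
  simp only [Set.mem_ofPred_eq, hexpand]
  exact sum_choose_eq_zero_of_infinite hp (factorial_dvd_prime_pow p O) _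

/-- The shift operator `(u₀, u₁, …) ↦ (u₁, u₂, …)`. A linear recurrence for `u` with
characteristic polynomial `P` is the equation `aeval (seqShift R) P u = 0`. -/
def seqShift (R : Type*) [CommSemiring R] : Module.End R (ℕ → R) :=
  LinearMap.funLeft R R (· + 1)

section Shift

variable {R : Type*} [CommRing R]

lemma seqShift_pow_apply (u : ℕ → R) (k n : ℕ) : (seqShift R ^ k) u n = u (n + k) := by
  induction k generalizing n with
  | zero => rfl
  | succ k ih =>
    rw [pow_succ', Module.End.mul_apply]
    exact (ih (n + 1)).trans (congrArg u (by ring))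

lemma aeval_seqShift_map {S : Type*} [CommRing S] (φ : R →+* S) (P : R[X]) (u : ℕ → R) :
    aeval (seqShift S) (P.map φ) (φ ∘ u) = φ ∘ aeval (seqShift R) P u := by
  ext n
  rw [aeval_eq_sum_range' (natDegree_map_le.trans_lt P.natDegree.lt_succ_self),
    aeval_eq_sum_range]
  simp [seqShift_pow_apply]

lemma aeval_seqShift_mul_eq_zero {P : R[X]} {u : ℕ → R} (h : aeval (seqShift R) P u = 0)
    (Q : R[X]) : aeval (seqShift R) (Q * P) u = 0 := by
  rw [map_mul, Module.End.mul_apply, h, map_zero]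

lemma aeval_seqShift_X_sub_one_const (a : R) :
    aeval (seqShift R) (X - 1 : R[X]) (fun _ ↦ a) = 0 := by
  ext n
  simp [seqShift]

lemma exists_linearMap_adjoinRoot_apply_root_pow {P : R[X]} {u : ℕ → R}
    (h : aeval (seqShift R) P u = 0) :
    ∃ l : AdjoinRoot P →ₗ[R] R, ∀ n, l (AdjoinRoot.root P ^ n) = u n := by
  let eval₀ : R[X] →ₗ[R] R :=
    LinearMap.proj 0 ∘ₗ LinearMap.applyₗ u ∘ₗ (aeval (seqShift R)).toLinearMap
  have hker : (Ideal.span {P}).restrictScalars R ≤ LinearMap.ker eval₀ := by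
    intro Q hQ
    obtain ⟨K, rfl⟩ := Ideal.mem_span_singleton'.mp hQ
    exact congrFun (aeval_seqShift_mul_eq_zero h K) 0
  refine ⟨Submodule.liftQ _ eval₀ hker ∘ₗ
    (Submodule.Quotient.restrictScalarsEquiv R (Ideal.span {P})).symm.toLinearMap, fun n ↦ ?_⟩
  calc eval₀ (X ^ n) = (seqShift R ^ n) u 0 := by simp [eval₀]
    _ = u n := by rw [seqShift_pow_apply, zero_add]

lemma isUnit_adjoinRoot_root {P : R[X]} (h : IsUnit (P.coeff 0)) :
    IsUnit (AdjoinRoot.root P) := by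
  have hroot : AdjoinRoot.root P * AdjoinRoot.mk P P.divX = - AdjoinRoot.of P (P.coeff 0) := by
    have hP := congrArg (AdjoinRoot.mk P) P.X_mul_divX_add
    rw [map_add, map_mul, AdjoinRoot.mk_self, AdjoinRoot.mk_X, AdjoinRoot.mk_C] at hP
    exact eq_neg_of_add_eq_zero_left hP
  exact isUnit_of_mul_isUnit_left (hroot ▸ (h.map _).neg)

lemma aeval_seqShift_charPoly {E : LinearRecurrence R} {u : ℕ → R} (h : E.IsSolution u) :
    aeval (seqShift R) E.charPoly u = 0 := by
  ext n
  simp [LinearRecurrence.charPoly, seqShift_pow_apply, h n, aeval_monomial]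

end Shift

section Embedding

lemma uncountable_padicInt (p : ℕ) [Fact p.Prime] : Uncountable ℤ_[p] := by
  rw [← Cardinal.aleph0_lt_mk_iff, ← IsFractionRing.cardinalMk ℤ_[p] ℚ_[p]]
  exact Cardinal.aleph0_lt_continuum.trans_le (continuum_le_cardinal_of_nontriviallyNormedField _)

lemma injective_algebraMap_padicInt (p : ℕ) [Fact p.Prime] (K : Type*) [Ring K] [Nontrivial K]
    [Algebra ℤ_[p] K] [Algebra ℚ_[p] K] [IsScalarTower ℤ_[p] ℚ_[p] K] :
    Function.Injective (algebraMap ℤ_[p] K) := by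
  rw [IsScalarTower.algebraMap_eq ℤ_[p] ℚ_[p] K]
  exact (algebraMap ℚ_[p] K).injective.comp (IsFractionRing.injective ℤ_[p] ℚ_[p])

lemma exists_algebraicIndependent_of_countable (R S ι : Type*) [CommRing R] [Countable R]
    [CommRing S] [IsDomain S] [Uncountable S] [Algebra R S] [FaithfulSMul R S] [Countable ι] :
    ∃ v : ι → S, AlgebraicIndependent R v := by
  obtain ⟨κ, v, hv⟩ := exists_isTranscendenceBasis' R S
  have hκ : Uncountable κ := by
    by_contra hcount
    rw [not_uncountable_iff] at hcount
    have hinj := FaithfulSMul.algebraMap_injective R S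
    have : IsDomain R := hinj.isDomain _
    have : Countable (MvPolynomial κ R) := by
      rw [← Cardinal.mk_le_aleph0_iff]
      exact MvPolynomial.cardinalMk_le_max_lift.trans (by simp)
    have : Countable (Algebra.adjoin R (Set.range v)) := hv.1.aevalEquiv.symm.injective.countable
    have := hv.isAlgebraic
    have hS := Algebraic.countable (Algebra.adjoin R (Set.range v)) S
    simp only [Algebra.IsAlgebraic.isAlgebraic, Set.ofPred_true, Set.countable_univ_iff] at hS
    exact not_countable hS
  obtain ⟨f, hf⟩ := exists_injective_nat ι
  exact ⟨v ∘ Infinite.natEmbedding κ ∘ f,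
    hv.1.comp _ ((Infinite.natEmbedding κ).injective.comp hf)⟩

lemma algebraicIndependent_add_mul {R S ι : Type*} [CommRing R] [IsDomain R] [CommRing S]
    [Algebra R S] {v : ι → S} (hv : AlgebraicIndependent R v) (t : ι → R) {r : R} (hr : r ≠ 0) :
    AlgebraicIndependent R fun i ↦ algebraMap R S (t i) + algebraMap R S r * v i := by
  have htrans (i : ι) : Transcendental R (C r * X + C (t i)) := by
    apply Polynomial.transcendental
    · simp [natDegree_linear hr]
    · simpa [leadingCoeff_linear hr] using hr
  simpa [add_comm] using hv.polynomial_aeval_of_transcendental htrans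

lemma exists_injective_ringHom_padicInt_isUnit {ι : Type*} [Countable ι] {h : MvPolynomial ι ℤ}
    (hh : h ≠ 0) :
    ∃ (p : ℕ) (_ : Fact p.Prime) (ψ : MvPolynomial ι ℤ →+* ℤ_[p]),
      Function.Injective ψ ∧ IsUnit (ψ h) := by
  obtain ⟨t, ht⟩ : ∃ t : ι → ℤ, MvPolynomial.eval t h ≠ 0 := by
    by_contra! hzero
    exact hh (MvPolynomial.funext (by simpa using hzero))
  obtain ⟨p, hple, hp⟩ := Nat.exists_infinite_primes ((MvPolynomial.eval t h).natAbs + 1)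
  have : Fact p.Prime := ⟨hp⟩
  have := uncountable_padicInt p
  obtain ⟨v, hv⟩ := exists_algebraicIndependent_of_countable ℤ ℤ_[p] ι
  have hτ := algebraicIndependent_add_mul hv t (r := p) (mod_cast hp.ne_zero)
  refine ⟨p, ‹_›, _, hτ, ?_⟩
  have hreduce : (PadicInt.toZMod (p := p)).comp (MvPolynomial.aeval
      fun i ↦ algebraMap ℤ ℤ_[p] (t i) + algebraMap ℤ ℤ_[p] p * v i).toRingHom =
      (Int.castRingHom (ZMod p)).comp (MvPolynomial.eval t) := by
    ext i <;> simp
  by_contra hunit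
  have hker : _ ∈ IsLocalRing.maximalIdeal ℤ_[p] := hunit
  rw [← PadicInt.ker_toZMod, RingHom.mem_ker] at hker
  have hdvd : (p : ℤ) ∣ MvPolynomial.eval t h := by
    rw [← ZMod.intCast_zmod_eq_zero_iff_dvd]
    exact (DFunLike.congr_fun hreduce h).symm.trans hker
  have hle := Nat.le_of_dvd (Int.natAbs_pos.mpr ht) (Int.natCast_dvd.mp hdvd)
  lia

lemma exists_injective_ringHom_extension {B A K : Type*} [CommRing B] [CommRing A] [IsDomain A]
    [Algebra B A] [FaithfulSMul B A] [Algebra.IsAlgebraic B A] [Field K] [IsAlgClosed K]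
    {ψ : B →+* K} (hψ : Function.Injective ψ) :
    ∃ φ : A →+* K, Function.Injective φ ∧ φ.comp (algebraMap B A) = ψ := by
  have : IsDomain B := hψ.isDomain ψ
  let : Algebra B K := ψ.toAlgebra
  have : FaithfulSMul B K := (faithfulSMul_iff_algebraMap_injective _ _).mpr hψ
  let φ : A →ₐ[B] K := IsAlgClosed.lift
  refine ⟨φ.toRingHom, ?_, φ.comp_algebraMap⟩
  rw [injective_iff_map_eq_zero]
  intro a ha
  by_contra hne
  refine Ideal.comap_ne_bot_of_algebraic_mem (R := B) (I := RingHom.ker φ) hne ha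
    (Algebra.IsAlgebraic.isAlgebraic a) ?_
  rw [eq_bot_iff]
  intro b hb
  have hψb : ψ b = 0 := (φ.commutes b).symm.trans hb
  exact (map_eq_zero_iff ψ hψ).mp hψb

lemma isIntegral_map_of_isIntegral_smul {B A R K : Type*} [CommRing B] [CommRing A] [Algebra B A]
    [CommRing R] [CommRing K] [Algebra R K] {ψ : B →+* R} {φ : A →+* K}
    (hcomm : φ.comp (algebraMap B A) = (algebraMap R K).comp ψ) {b : B} (hb : IsUnit (ψ b)) {a : A}
    (ha : IsIntegral B (b • a)) : IsIntegral R (φ a) := by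
  have hsmul : φ (b • a) = ψ b • φ a := by
    rw [Algebra.smul_def, map_mul, Algebra.smul_def]
    exact congrArg (· * φ a) (DFunLike.congr_fun hcomm b)
  obtain ⟨w, hw⟩ := hb.exists_left_inv
  have hφa : φ a = w • φ (b • a) := by rw [hsmul, smul_smul, hw, one_smul]
  exact hφa ▸ (ha.map_of_comp_eq ψ φ hcomm.symm).smul w

lemma exists_finite_subalgebra_of_isIntegral {R K A : Type*} [CommRing R] [CommRing K]
    [Algebra R K] [CommRing A] {S : Finset A} (hS : Algebra.adjoin ℤ (S : Set A) = ⊤)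
    (φ : A →+* K) (hφ : ∀ s ∈ S, IsIntegral R (φ s)) :
    ∃ O : Subalgebra R K, Module.Finite R O ∧ ∀ a, φ a ∈ O := by
  refine ⟨Algebra.adjoin R (φ '' S), Algebra.finite_adjoin_of_finite_of_isIntegral
    (S.finite_toSet.image φ) (by simpa using hφ), fun a ↦ ?_⟩
  have ha : a ∈ Algebra.adjoin ℤ (S : Set A) := hS ▸ Algebra.mem_top
  induction ha using Algebra.adjoin_induction with
  | mem s hs => exact Algebra.subset_adjoin (Set.mem_image_of_mem φ hs)
  | algebraMap n => simp
  | add a b _ _ ha hb => exact map_add φ a b ▸ add_mem ha hb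
  | mul a b _ _ ha hb => exact map_mul φ a b ▸ mul_mem ha hb

lemma exists_injective_ringHom_finite_subalgebra (A : Type*) [CommRing A] [IsDomain A]
    [CharZero A] [Algebra.FiniteType ℤ A] :
    ∃ (p : ℕ) (_ : Fact p.Prime) (O : Subalgebra ℤ_[p] (AlgebraicClosure ℚ_[p])) (φ : A →+* O),
      Module.Finite ℤ_[p] O ∧ Function.Injective φ := by
  obtain ⟨S, hS⟩ := Algebra.FiniteType.out (R := ℤ) (A := A)
  have : Algebra.IsAlgebraic (Algebra.adjoin ℤ (S : Set A)) A :=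
    ⟨fun a ↦ isAlgebraic_algebraMap (⟨a, hS ▸ Algebra.mem_top⟩ : Algebra.adjoin ℤ (S : Set A))⟩
  obtain ⟨t, htS, ht⟩ := exists_isTranscendenceBasis_subset (R := ℤ) (S : Set A)
  have : Finite t := S.finite_toSet.subset htS
  let B := Algebra.adjoin ℤ (Set.range ((↑) : t → A))
  have : Algebra.IsAlgebraic B A := ht.isAlgebraic
  obtain ⟨h, hh, hint⟩ := Algebra.IsAlgebraic.exists_integral_multiples B S
  let e := ht.1.aevalEquiv.symm
  obtain ⟨p, _, ψ, hψ, hunit⟩ := exists_injective_ringHom_padicInt_isUnit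
    ((map_ne_zero_iff e e.injective).mpr hh)
  let K := AlgebraicClosure ℚ_[p]
  let ψB : B →+* ℤ_[p] := ψ.comp (e : B →+* MvPolynomial t ℤ)
  obtain ⟨φ, hφ, hext⟩ := exists_injective_ringHom_extension (A := A)
    (ψ := (algebraMap ℤ_[p] K).comp ψB)
    ((injective_algebraMap_padicInt p K).comp (hψ.comp e.injective))
  obtain ⟨O, hO, hφO⟩ := exists_finite_subalgebra_of_isIntegral hS φ
    fun s hs ↦ isIntegral_map_of_isIntegral_smul hext hunit (hint s hs)
  exact ⟨p, ‹_›, O, φ.codRestrict O hφO, hO, fun a b hab ↦ hφ (congrArg Subtype.val hab)⟩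

lemma finiteType_int_of_isLocalization_away {A : Type*} [CommRing A] [Algebra.FiniteType ℤ A]
    (a : A) (A' : Type*) [CommRing A'] [Algebra A A'] [IsLocalization.Away a A'] :
    Algebra.FiniteType ℤ A' :=
  .trans ‹_› (IsLocalization.finiteType_of_monoid_fg (.powers a) A')

lemma exists_injective_ringHom_finite_subalgebra_isUnit {A : Type*} [CommRing A] [IsDomain A]
    [CharZero A] [Algebra.FiniteType ℤ A] {a : A} (ha : a ≠ 0) :
    ∃ (p : ℕ) (_ : Fact p.Prime) (O : Subalgebra ℤ_[p] (AlgebraicClosure ℚ_[p])) (φ : A →+* O),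
      Module.Finite ℤ_[p] O ∧ Function.Injective φ ∧ IsUnit (φ a) := by
  have hpow := powers_le_nonZeroDivisors_of_noZeroDivisors ha
  let A' := Localization.Away a
  have hAA' : Function.Injective (algebraMap A A') := IsLocalization.injective A' hpow
  have : IsDomain A' := IsLocalization.isDomain_localization hpow
  have : CharZero A' := charZero_of_injective_algebraMap hAA'
  have := finiteType_int_of_isLocalization_away a A'
  obtain ⟨p, _, O, φ, hO, hφ⟩ := exists_injective_ringHom_finite_subalgebra A'
  exact ⟨p, ‹_›, O, φ.comp (algebraMap A A'), hO, hφ.comp hAA',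
    (IsLocalization.Away.algebraMap_isUnit a).map φ⟩

end Embedding

section ZeroSet

lemma exists_splitsModulo_of_coeff_zero_ne_zero {A : Type*} [CommRing A] [IsDomain A]
    [CharZero A] [Algebra.FiniteType ℤ A] {P : A[X]} (hP : P.Monic) (hP₀ : P.coeff 0 ≠ 0)
    {u : ℕ → A} (hu : aeval (seqShift A) P u = 0) : ∃ N > 0, SplitsModulo N {n | u n = 0} := by
  obtain ⟨p, _, O, φ, _, hφ, hunit⟩ := exists_injective_ringHom_finite_subalgebra_isUnit hP₀
  let Q := P.map φ
  have : Module.Finite O (AdjoinRoot Q) := (hP.map φ).finite_adjoinRoot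
  have : Module.Finite ℤ_[p] (AdjoinRoot Q) := .trans O _
  obtain ⟨N, hN, hsplit⟩ :=
    exists_splitsModulo_addMonoidHom_pow p O (isUnit_adjoinRoot_root (P := Q) (by rwa [coeff_map]))
  have hφu : aeval (seqShift O) Q (φ ∘ u) = 0 := by
    rw [aeval_seqShift_map, hu]
    ext n
    simp
  obtain ⟨l, hl⟩ := exists_linearMap_adjoinRoot_apply_root_pow hφu
  have hzero (n : ℕ) : l (AdjoinRoot.root Q ^ n) = 0 ↔ u n = 0 := by
    rw [hl]
    exact map_eq_zero_iff φ hφ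
  exact ⟨N, hN, by simpa [hzero] using hsplit l.toAddMonoidHom⟩

lemma exists_splitsModulo_shift_of_finiteType {A : Type*} [CommRing A] [IsDomain A]
    [CharZero A] [Algebra.FiniteType ℤ A] {P : A[X]} (hP : P.Monic)
    {u : ℕ → A} (hu : aeval (seqShift A) P u = 0) :
    ∃ s, ∃ N > 0, SplitsModulo N {n | u (n + s) = 0} := by
  obtain ⟨Q, hPQ, hQ⟩ := exists_eq_pow_rootMultiplicity_mul_and_not_dvd P hP.ne_zero 0
  rw [C_0, sub_zero] at hPQ hQ
  set s := P.rootMultiplicity 0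
  have hQmonic : Q.Monic := (monic_X_pow s).of_mul_monic_left (hPQ ▸ hP)
  have hshift : aeval (seqShift A) Q ((seqShift A ^ s) u) = 0 := by
    rw [hPQ, mul_comm, map_mul, Module.End.mul_apply, map_pow, aeval_X] at hu
    exact hu
  obtain ⟨N, hN, hsplit⟩ :=
    exists_splitsModulo_of_coeff_zero_ne_zero hQmonic (X_dvd_iff.not.mp hQ) hshift
  exact ⟨s, N, hN, by simpa only [seqShift_pow_apply] using hsplit⟩

lemma mem_of_aeval_seqShift_eq_zero {R : Type*} [CommRing R] {P : R[X]} (hP : P.Monic)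
    {u : ℕ → R} (hu : aeval (seqShift R) P u = 0) {A : Subring R} (hPA : ∀ i, P.coeff i ∈ A)
    (huA : ∀ i < P.natDegree, u i ∈ A) (n : ℕ) : u n ∈ A := by
  induction n using Nat.strong_induction_on with
  | _ n ih =>
    rcases lt_or_ge n P.natDegree with hn | hn
    · exact huA n hn
    obtain ⟨k, rfl⟩ := Nat.exists_eq_add_of_le' hn
    have hrec : u (k + P.natDegree) =
        - ∑ i ∈ Finset.range P.natDegree, P.coeff i * u (k + i) := by
      have h := congrFun hu k
      rw [aeval_eq_sum_range, Finset.sum_range_succ] at h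
      simp only [LinearMap.add_apply, LinearMap.sum_apply, LinearMap.smul_apply, Pi.add_apply,
        Finset.sum_apply, Pi.smul_apply, seqShift_pow_apply, smul_eq_mul, hP.coeff_natDegree,
        one_mul] at h
      exact eq_neg_of_add_eq_zero_right h
    rw [hrec]
    exact neg_mem (sum_mem fun i hi ↦ mul_mem (hPA i) (ih _ (by simpa using hi)))

theorem exists_splitsModulo_shift {R : Type*} [CommRing R] [IsDomain R] [CharZero R] {P : R[X]}
    (hP : P.Monic) {u : ℕ → R} (hu : aeval (seqShift R) P u = 0) :
    ∃ s, ∃ N > 0, SplitsModulo N {n | u (n + s) = 0} := by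
  classical
  let G : Finset R := P.coeffs ∪ (Finset.range P.natDegree).image u
  let A : Subalgebra ℤ R := Algebra.adjoin ℤ G
  have hGA : (G : Set R) ⊆ A := Algebra.subset_adjoin
  have : Algebra.FiniteType ℤ A := A.fg_iff_finiteType.mp (Subalgebra.fg_adjoin_finset G)
  have hPA (i : ℕ) : P.coeff i ∈ A := by
    by_cases hi : P.coeff i = 0
    · exact hi ▸ zero_mem A
    · exact hGA (Finset.mem_union_left _ (coeff_mem_coeffs hi))
  have huA : ∀ n, u n ∈ A := by
    refine mem_of_aeval_seqShift_eq_zero (A := A.toSubring) hP hu hPA fun i hi ↦ hGA ?_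
    exact Finset.mem_union_right _ (Finset.mem_image_of_mem u (Finset.mem_range.mpr hi))
  obtain ⟨Q, hQP, -, hQ⟩ := lifts_and_natDegree_eq_and_monic (f := algebraMap A R)
    ((lifts_iff_coeff_lifts P).mpr fun i ↦ ⟨⟨_, hPA i⟩, rfl⟩) hP
  let v : ℕ → A := fun n ↦ ⟨u n, huA n⟩
  have hv : aeval (seqShift A) Q v = 0 := by
    have h := aeval_seqShift_map (algebraMap A R) Q v
    rw [hQP, show algebraMap A R ∘ v = u from rfl, hu] at h
    ext n
    exact (congrFun h n).symm
  simpa [v, Subtype.ext_iff] using exists_splitsModulo_shift_of_finiteType hQ hv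

end ZeroSet

/-- The set `Z` is a finite union of arithmetic progressions in the sense of `IsArithProg`. -/
def IsFiniteUnionArithProg (Z : Set ℕ) : Prop :=
  ∃ 𝒜 : Set (Set ℕ), 𝒜.Finite ∧ (∀ S ∈ 𝒜, IsArithProg S) ∧ Z = ⋃₀ 𝒜

section ArithProg

lemma IsArithProg.isFiniteUnionArithProg {S : Set ℕ} (h : IsArithProg S) :
    IsFiniteUnionArithProg S :=
  ⟨{S}, Set.finite_singleton S, by simpa using h, (Set.sUnion_singleton S).symm⟩

lemma isFiniteUnionArithProg_biUnion {ι : Type*} {I : Set ι} (hI : I.Finite) {Z : ι → Set ℕ}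
    (h : ∀ i ∈ I, IsFiniteUnionArithProg (Z i)) : IsFiniteUnionArithProg (⋃ i ∈ I, Z i) := by
  choose! 𝒜 hfin hAP hZ using h
  refine ⟨⋃ i ∈ I, 𝒜 i, hI.biUnion hfin, by simpa using fun S i hi ↦ hAP i hi S, ?_⟩
  simp only [Set.sUnion_iUnion]
  exact Set.iUnion₂_congr hZ

lemma IsFiniteUnionArithProg.union {Y Z : Set ℕ} (hY : IsFiniteUnionArithProg Y)
    (hZ : IsFiniteUnionArithProg Z) : IsFiniteUnionArithProg (Y ∪ Z) := by
  obtain ⟨𝒜, h𝒜, h𝒜P, rfl⟩ := hY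
  obtain ⟨ℬ, hℬ, hℬP, rfl⟩ := hZ
  exact ⟨𝒜 ∪ ℬ, h𝒜.union hℬ, fun S hS ↦ hS.elim (h𝒜P S) (hℬP S), (Set.sUnion_union 𝒜 ℬ).symm⟩

lemma isArithProg_singleton (b : ℕ) : IsArithProg {b} := ⟨0, b, by simp⟩

lemma isFiniteUnionArithProg_of_finite {Z : Set ℕ} (hZ : Z.Finite) :
    IsFiniteUnionArithProg Z := by
  simpa using isFiniteUnionArithProg_biUnion hZ
    fun n _ ↦ (isArithProg_singleton n).isFiniteUnionArithProg

lemma eq_sep_lt_union_biUnion_residueClass {N : ℕ} (hN : 0 < N) (s : ℕ) (Z : Set ℕ) :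
    Z = {n ∈ Z | n < s} ∪
      ⋃ r ∈ Set.Iio N, (fun n ↦ r + N * n + s) '' {n | r + N * n + s ∈ Z} := by
  ext n
  simp only [Set.mem_union, Set.mem_iUnion, Set.mem_image, Set.mem_ofPred_eq,
    exists_prop]
  constructor
  · intro hn
    refine (lt_or_ge n s).imp (⟨hn, ·⟩) fun hs ↦ ?_
    have hdiv : (n - s) % N + N * ((n - s) / N) + s = n := by
      rw [Nat.mod_add_div, Nat.sub_add_cancel hs]
    exact ⟨(n - s) % N, Nat.mod_lt _ hN, (n - s) / N, by rwa [hdiv], hdiv⟩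
  · rintro (⟨hn, -⟩ | ⟨r, -, k, hk, rfl⟩)
    exacts [hn, hk]

lemma SplitsModulo.isFiniteUnionArithProg {N s : ℕ} (hN : 0 < N) {Z : Set ℕ}
    (h : SplitsModulo N {n | n + s ∈ Z}) : IsFiniteUnionArithProg Z := by
  rw [eq_sep_lt_union_biUnion_residueClass hN s Z]
  refine (isFiniteUnionArithProg_of_finite ((Set.finite_lt_nat s).subset fun n hn ↦ hn.2)).union
    (isFiniteUnionArithProg_biUnion (Set.finite_Iio N) fun r _ ↦ ?_)
  by_cases hfin : {n | r + N * n + s ∈ Z}.Finite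
  · exact isFiniteUnionArithProg_of_finite (hfin.image _)
  · have huniv : {n | r + N * n + s ∈ Z} = Set.univ := Set.eq_univ_of_forall (h r hfin)
    rw [huniv, Set.image_univ]
    refine IsArithProg.isFiniteUnionArithProg ⟨N, r + s, ?_⟩
    ext x
    exact exists_congr fun k ↦ by grind

lemma IsFiniteUnionArithProg.exists_fin {Z : Set ℕ} (h : IsFiniteUnionArithProg Z) :
    ∃ (r : ℕ) (F : Fin r → Set ℕ), (∀ i, IsArithProg (F i)) ∧ Z = ⋃ i, F i := by
  obtain ⟨𝒜, hfin, hAP, rfl⟩ := h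
  obtain ⟨r, F, -, rfl⟩ := hfin.fin_param
  exact ⟨r, F, fun i ↦ hAP _ (Set.mem_range_self i), Set.sUnion_range F⟩

end ArithProg

theorem stmt2_general {R : Type*} [CommRing R] [IsDomain R] [CharZero R] (u : ℕ → R) (m : ℕ)
    (c : Fin m → R) (hrec : ∀ n : ℕ, u (n + m) + ∑ i : Fin m, c i * u (n + i) = 0) (cst : R) :
    ∃ (r : ℕ) (F : Fin r → Set ℕ), (∀ i, IsArithProg (F i)) ∧
      {n : ℕ | u n = cst} = ⋃ i, F i := by
  let E : LinearRecurrence R := ⟨m, fun i ↦ -c i⟩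
  have hE : E.IsSolution u := fun n ↦ by
    simpa [E, Finset.sum_neg_distrib] using eq_neg_of_add_eq_zero_left (hrec n)
  have hP : ((X - 1) * E.charPoly).Monic := (monic_X_sub_C 1).mul E.charPoly_monic
  have hv : aeval (seqShift R) ((X - 1) * E.charPoly) (u - fun _ ↦ cst) = 0 := by
    rw [map_sub, aeval_seqShift_mul_eq_zero (aeval_seqShift_charPoly hE), mul_comm,
      aeval_seqShift_mul_eq_zero (aeval_seqShift_X_sub_one_const cst), sub_zero]
  obtain ⟨s, N, hN, hsplit⟩ := exists_splitsModulo_shift hP hv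
  have hsplit' : SplitsModulo N {n | n + s ∈ {n | u n = cst}} := by
    simpa only [Pi.sub_apply, sub_eq_zero, Set.mem_ofPred_eq] using hsplit
  exact (hsplit'.isFiniteUnionArithProg hN).exists_fin

/-- Skolem–Mahler–Lech. -/
theorem stmt2 (u : ℕ → ℂ) (m : ℕ) (hm : 0 < m) (c : Fin m → ℂ)
    (hrec : ∀ n : ℕ, u (n + m) + ∑ i : Fin m, c i * u (n + i) = 0)
    (cst : ℂ) :
    ∃ (r : ℕ) (F : Fin r → Set ℕ), (∀ i, IsArithProg (F i)) ∧
      {n : ℕ | u n = cst} = ⋃ i, F i :=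
  stmt2_general u m c hrec cst
end

section
/- Let {u_n} be a non-degenerate linear recurrence sequence given by u_n = ∑_{i=1}^s P_i(n) r_i^n with nonzero polynomials P_i and distinct nonzero complex numbers r_i. If the set {n : u_n = c} is infinite for some constant c, then the sequence {u_n} is eventually constant. -/
/-- `z` is a root of unity. -/
def IsRootOfUnity (z : ℂ) : Prop := ∃ k : ℕ, 0 < k ∧ z ^ k = 1

/-!
The constant `c` contributes one more term `-c * 1 ^ n`, so it suffices to treat the zeros of a
sequence `∑ i, P i (n) * r i ^ n`. Following Lech, embed the field generated by the data into an
algebraic closure of some `ℚ_[p]` so that all `r i` become units. Some power `r i ^ M` is then, for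
all `i` at once, so close to `1` that on each residue class modulo `M` the sequence is a `p`-adic
analytic function of `n`. Infinitely many zeros fall into one class, so the sequence vanishes
identically there by Strassmann's theorem. By non-degeneracy the `r i ^ M` are still distinct, and
exponential polynomials with distinct roots are linearly independent, so every `P i` is zero.
-/

open Polynomial

section GaussNorm

variable {K : Type*} [NormedField K] [IsUltrametricDist K] {c : ℝ}

theorem norm_eval_le_gaussNorm (R : K[X]) {x : K} (hx : ‖x‖ ≤ c) :
    ‖R.eval x‖ ≤ R.gaussNorm (NormedField.toAbsoluteValue K) c := by
  have hc : 0 ≤ c := (norm_nonneg x).trans hx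
  rw [eval_eq_sum_range]
  refine IsUltrametricDist.norm_sum_le_of_forall_le_of_nonneg (gaussNorm_nonneg _ _ hc) fun i _ ↦ ?_
  calc ‖R.coeff i * x ^ i‖ ≤ ‖R.coeff i‖ * c ^ i := by rw [norm_mul, norm_pow]; gcongr
    _ ≤ _ := R.le_gaussNorm (NormedField.toAbsoluteValue K) hc i

theorem gaussNorm_add_le_max (hc : 0 ≤ c) (R S : K[X]) :
    (R + S).gaussNorm (NormedField.toAbsoluteValue K) c ≤
      max (R.gaussNorm (NormedField.toAbsoluteValue K) c)
        (S.gaussNorm (NormedField.toAbsoluteValue K) c) :=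
  isNonarchimedean_gaussNorm _ IsUltrametricDist.isNonarchimedean_norm hc R S

theorem gaussNorm_X_sub_C (hc : 0 < c) {a : K} (ha : ‖a‖ ≤ c) :
    (X - C a).gaussNorm (NormedField.toAbsoluteValue K) c = c := by
  refine le_antisymm ?_ ?_
  · rw [sub_eq_add_neg, ← C_neg]
    refine (gaussNorm_add_le_max hc.le _ _).trans (max_le ?_ ?_)
    · simp [← monomial_one_one_eq_X]
    · rw [gaussNorm_C, AbsoluteValue.map_neg]
      exact ha
  · have h := (X - C a).le_gaussNorm (NormedField.toAbsoluteValue K) hc.le 1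
    rwa [coeff_sub, coeff_X_one, coeff_C_succ, sub_zero, AbsoluteValue.map_one, one_mul,
      pow_one] at h

-- Strassmann's argument: each root in the unit disc splits off a factor of Gauss norm `c`.
theorem norm_eval_mul_pow_card_le_gaussNorm (hc : 1 ≤ c) {x : K} (hx : ‖x‖ ≤ 1) (T : Finset K)
    (hT : ∀ a ∈ T, ‖a‖ ≤ 1) (R : K[X]) (hR : ∀ a ∈ T, R.IsRoot a) :
    ‖R.eval x‖ * c ^ T.card ≤ R.gaussNorm (NormedField.toAbsoluteValue K) c := by
  classical
  have hc₀ : 0 < c := zero_lt_one.trans_le hc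
  induction T using Finset.induction_on generalizing R with
  | empty => simpa using norm_eval_le_gaussNorm R (hx.trans hc)
  | insert a T haT ih =>
    rw [Finset.forall_mem_insert] at hT hR
    obtain ⟨Q, rfl⟩ := dvd_iff_isRoot.2 hR.1
    have hQ : ∀ b ∈ T, Q.IsRoot b := fun b hb ↦
      (root_mul.1 (hR.2 b hb)).resolve_left fun h ↦ haT (root_X_sub_C.1 h ▸ hb)
    have hxa : ‖x - a‖ ≤ 1 := by
      rw [← dist_eq_norm]
      exact (dist_triangle_max x 0 a).trans (max_le (by simpa using hx) (by simpa using hT.1))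
    calc ‖((X - C a) * Q).eval x‖ * c ^ (insert a T).card
        = ‖x - a‖ * (‖Q.eval x‖ * c ^ T.card * c) := by
          rw [Finset.card_insert_of_notMem haT, eval_mul, norm_mul, eval_sub, eval_X, eval_C]
          ring
      _ ≤ 1 * (Q.gaussNorm (NormedField.toAbsoluteValue K) c * c) := by
          gcongr
          exact ih hT.2 Q hQ
      _ = _ := by
          rw [gaussNorm_mul IsUltrametricDist.isNonarchimedean_norm hc₀,
            gaussNorm_X_sub_C hc₀ (hT.1.trans hc)]
          ring

theorem gaussNorm_descPochhammer_le (hc : 1 ≤ c) (i : ℕ) :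
    (descPochhammer K i).gaussNorm (NormedField.toAbsoluteValue K) c ≤ c ^ i := by
  have hc₀ : 0 < c := zero_lt_one.trans_le hc
  induction i with
  | zero =>
    rw [descPochhammer_zero, ← C_1, gaussNorm_C, AbsoluteValue.map_one, pow_zero]
  | succ i ih =>
    have hi : ‖(i : K)‖ ≤ c := (IsUltrametricDist.norm_natCast_le_one K i).trans hc
    rw [descPochhammer_succ_right, gaussNorm_mul IsUltrametricDist.isNonarchimedean_norm hc₀,
      ← C_eq_natCast, gaussNorm_X_sub_C hc₀ hi, pow_succ]
    gcongr

end GaussNorm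

/-- A sequence `f` is interpolable on the disc of radius `c` if it agrees on arbitrarily long
initial segments with polynomials of uniformly bounded Gauss norm of radius `c`. For `c > 1` this is
how one says that `f` is the restriction to `ℕ` of a power series with bounded Gauss norm, phrased
without power series so that the field need not be complete. -/
def DiscInterpolable {K : Type*} [NormedField K] (c : ℝ) (f : ℕ → K) : Prop :=
  ∃ B : ℝ, ∀ n : ℕ, ∃ R : K[X], (∀ t ≤ n, R.eval (t : K) = f t) ∧
    R.gaussNorm (NormedField.toAbsoluteValue K) c ≤ B

namespace DiscInterpolable

variable {K : Type*} [NormedField K] {c : ℝ}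

theorem eval_natCast (P : K[X]) : DiscInterpolable c fun n ↦ P.eval (n : K) :=
  ⟨_, fun _ ↦ ⟨P, fun _ _ ↦ rfl, le_rfl⟩⟩

variable [IsUltrametricDist K] {f g : ℕ → K}

protected theorem add (hc : 0 ≤ c) (hf : DiscInterpolable c f) (hg : DiscInterpolable c g) :
    DiscInterpolable c (f + g) := by
  obtain ⟨B, hf⟩ := hf
  obtain ⟨D, hg⟩ := hg
  refine ⟨max B D, fun n ↦ ?_⟩
  obtain ⟨R, hR, hRB⟩ := hf n
  obtain ⟨S, hS, hSD⟩ := hg n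
  exact ⟨R + S, fun t ht ↦ by rw [eval_add, hR t ht, hS t ht, Pi.add_apply],
    (gaussNorm_add_le_max hc R S).trans (max_le_max hRB hSD)⟩

protected theorem mul (hc : 0 < c) (hf : DiscInterpolable c f) (hg : DiscInterpolable c g) :
    DiscInterpolable c (f * g) := by
  obtain ⟨B, hf⟩ := hf
  obtain ⟨D, hg⟩ := hg
  refine ⟨B * D, fun n ↦ ?_⟩
  obtain ⟨R, hR, hRB⟩ := hf n
  obtain ⟨S, hS, hSD⟩ := hg n
  refine ⟨R * S, fun t ht ↦ by rw [eval_mul, hR t ht, hS t ht, Pi.mul_apply], ?_⟩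
  rw [gaussNorm_mul IsUltrametricDist.isNonarchimedean_norm hc]
  exact mul_le_mul hRB hSD (gaussNorm_nonneg _ _ hc.le) ((gaussNorm_nonneg _ _ hc.le).trans hRB)

protected theorem sum {ι : Type*} {f : ι → ℕ → K} (hc : 0 ≤ c) (s : Finset ι)
    (hf : ∀ i ∈ s, DiscInterpolable c (f i)) : DiscInterpolable c (∑ i ∈ s, f i) :=
  Finset.sum_induction f _ (fun _ _ ↦ .add hc)
    ⟨0, fun _ ↦ ⟨0, fun _ _ ↦ eval_zero, (gaussNorm_zero _ _).le⟩⟩ hf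

-- The interpolating polynomials are the truncations of Newton's series `∑ i, z ^ i * (t choose i)`.
theorem one_add_pow [CharZero K] (hc : 1 ≤ c) {z : K}
    (hz : ∀ i : ℕ, ‖z ^ i / (i.factorial : K)‖ * c ^ i ≤ 1) :
    DiscInterpolable c fun n ↦ (1 + z) ^ n := by
  have hc₀ : 0 < c := zero_lt_one.trans_le hc
  refine ⟨1, fun n ↦ ⟨∑ i ∈ Finset.range (n + 1),
    C (z ^ i / (i.factorial : K)) * descPochhammer K i, fun t ht ↦ ?_, ?_⟩⟩
  · have hterm (i : ℕ) : (C (z ^ i / (i.factorial : K)) * descPochhammer K i).eval (t : K) =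
        z ^ i * (t.choose i : K) := by
      have hi : (i.factorial : K) ≠ 0 := Nat.cast_ne_zero.2 i.factorial_ne_zero
      rw [eval_mul, eval_C, descPochhammer_eval_eq_descFactorial,
        Nat.descFactorial_eq_factorial_mul_choose, Nat.cast_mul]
      field_simp
    simp only [eval_finsetSum, hterm, add_comm (1 : K) z, add_pow, one_pow, mul_one]
    refine (Finset.sum_subset (Finset.range_mono (by omega)) fun i _ hi ↦ ?_).symm
    rw [Nat.choose_eq_zero_of_lt (by simpa using hi), Nat.cast_zero, mul_zero]
  · refine Finset.sum_induction _ (fun R : K[X] ↦ R.gaussNorm _ c ≤ 1)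
      (fun R S hR hS ↦ (gaussNorm_add_le_max hc₀.le R S).trans (max_le hR hS)) ?_ fun i _ ↦ ?_
    · rw [gaussNorm_zero]
      exact zero_le_one
    · rw [gaussNorm_mul IsUltrametricDist.isNonarchimedean_norm hc₀, gaussNorm_C]
      calc ‖z ^ i / (i.factorial : K)‖ * (descPochhammer K i).gaussNorm _ c
          ≤ ‖z ^ i / (i.factorial : K)‖ * c ^ i := by gcongr; exact gaussNorm_descPochhammer_le hc i
        _ ≤ 1 := hz i

theorem eq_zero_of_infinite [CharZero K] (hc : 1 < c) (hf : DiscInterpolable c f)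
    (hinf : {n | f n = 0}.Infinite) : f = 0 := by
  obtain ⟨B, hf⟩ := hf
  have hbound (t k : ℕ) : ‖f t‖ * c ^ k ≤ B := by
    obtain ⟨T, hT, rfl⟩ := hinf.exists_subset_card_eq k
    obtain ⟨R, hR, hRB⟩ := hf (max t (T.sup id))
    have hroot : ∀ a ∈ T.map Nat.castEmbedding, R.IsRoot (a : K) := by
      rintro _ ha
      obtain ⟨n, hn, rfl⟩ := Finset.mem_map.1 ha
      exact (hR n (le_max_of_le_right (Finset.le_sup (f := id) hn))).trans (hT hn)
    have hle : ∀ a ∈ T.map Nat.castEmbedding, ‖(a : K)‖ ≤ 1 := by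
      rintro _ ha
      obtain ⟨n, -, rfl⟩ := Finset.mem_map.1 ha
      exact IsUltrametricDist.norm_natCast_le_one K n
    have h := norm_eval_mul_pow_card_le_gaussNorm hc.le
      (IsUltrametricDist.norm_natCast_le_one K t) _ hle R hroot
    rw [hR t (le_max_left _ _), Finset.card_map] at h
    exact h.trans hRB
  funext t
  by_contra ht
  have hpos : 0 < ‖f t‖ := norm_pos_iff.2 ht
  obtain ⟨k, hk⟩ := pow_unbounded_of_one_lt (B / ‖f t‖) hc
  rw [div_lt_iff₀' hpos] at hk
  exact (hbound t k).not_gt hk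

end DiscInterpolable

section PadicEstimates

variable (p : ℕ) [Fact p.Prime]

theorem inv_pow_le_norm_factorial (n : ℕ) : (p : ℝ)⁻¹ ^ n ≤ ‖(n.factorial : ℚ_[p])‖ := by
  rw [Padic.norm_eq_zpow_neg_valuation (Nat.cast_ne_zero.2 n.factorial_ne_zero),
    Padic.valuation_natCast, zpow_neg, zpow_natCast, ← inv_pow]
  have hp : 2 ≤ p := (Fact.out : p.Prime).two_le
  refine pow_le_pow_of_le_one (by positivity) (inv_le_one_of_one_le₀ (mod_cast by omega)) ?_
  calc padicValNat p n.factorial ≤ (p - 1) * padicValNat p n.factorial :=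
        Nat.le_mul_of_pos_left _ (by omega)
    _ = n - (p.digits n).sum := sub_one_mul_padicValNat_factorial n
    _ ≤ n := Nat.sub_le _ _

variable {p} {L : Type*} [NormedField L] [NormedAlgebra ℚ_[p] L]

theorem norm_pow_div_factorial_mul_pow_le_one {z : L} (hz : ‖z‖ ≤ (p : ℝ)⁻¹ ^ 2) (n : ℕ) :
    ‖z ^ n / (n.factorial : L)‖ * (p : ℝ) ^ n ≤ 1 := by
  have hp : (0 : ℝ) < p := mod_cast (Fact.out : p.Prime).pos
  have hfac : (p : ℝ)⁻¹ ^ n ≤ ‖(n.factorial : L)‖ := by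
    rw [← map_natCast (algebraMap ℚ_[p] L), norm_algebraMap']
    exact inv_pow_le_norm_factorial p n
  have hfac₀ : 0 < ‖(n.factorial : L)‖ := (by positivity : 0 < (p : ℝ)⁻¹ ^ n).trans_le hfac
  rw [norm_div, norm_pow, div_mul_eq_mul_div, div_le_one hfac₀]
  calc ‖z‖ ^ n * (p : ℝ) ^ n ≤ ((p : ℝ)⁻¹ ^ 2) ^ n * (p : ℝ) ^ n := by gcongr
    _ = (p : ℝ)⁻¹ ^ n := by rw [← mul_pow]; field_simp
    _ ≤ ‖(n.factorial : L)‖ := hfac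

end PadicEstimates

-- The powers of `r` stay in the unit ball of a finite-dimensional, hence locally compact, subspace.
theorem exists_pow_sub_one_lt (k : Type*) {L ι : Type*} [NontriviallyNormedField k] [ProperSpace k]
    [NormedField L] [NormedAlgebra k L] [Algebra.IsAlgebraic k L] [Finite ι] {r : ι → L}
    (hr : ∀ i, ‖r i‖ = 1) {ε : ℝ} (hε : 0 < ε) : ∃ M > 0, ∀ i, ‖r i ^ M - 1‖ < ε := by
  cases nonempty_fintype ι
  let F : IntermediateField k L := IntermediateField.adjoin k (Set.range r)
  have : FiniteDimensional k F :=
    IntermediateField.finiteDimensional_adjoin fun x _ ↦ Algebra.IsIntegral.isIntegral x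
  have : ProperSpace F := FiniteDimensional.proper k F
  let x (i : ι) : F := ⟨r i, IntermediateField.subset_adjoin _ _ ⟨i, rfl⟩⟩
  have hx (n : ℕ) : x ^ n ∈ Metric.closedBall (0 : ι → F) 1 := by
    rw [mem_closedBall_zero_iff, pi_norm_le_iff_of_nonneg zero_le_one]
    intro i
    change ‖r i ^ n‖ ≤ 1
    rw [norm_pow, hr, one_pow]
  obtain ⟨_, -, φ, hφ, hlim⟩ := tendsto_subseq_of_bounded Metric.isBounded_closedBall hx
  obtain ⟨N, hN⟩ := Metric.cauchySeq_iff'.1 hlim.cauchySeq ε hε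
  have hlt : φ N < φ (N + 1) := hφ N.lt_succ_self
  refine ⟨φ (N + 1) - φ N, Nat.sub_pos_of_lt hlt, fun i ↦ ?_⟩
  have hdist : ‖r i ^ φ (N + 1) - r i ^ φ N‖ < ε := by
    have h := (dist_pi_lt_iff hε).1 (hN (N + 1) N.le_succ) i
    rwa [dist_eq_norm] at h
  calc ‖r i ^ (φ (N + 1) - φ N) - 1‖
      = ‖r i ^ φ N * (r i ^ (φ (N + 1) - φ N) - 1)‖ := by
        rw [norm_mul, norm_pow, hr, one_pow, one_mul]
    _ = ‖r i ^ φ (N + 1) - r i ^ φ N‖ := by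
        rw [mul_sub, mul_one, ← pow_add, Nat.add_sub_cancel' hlt.le]
    _ < ε := hdist

/-- The linear recurrence sequence `n ↦ ∑ i, P i (n) * r i ^ n` with characteristic roots `r i` and
polynomial coefficients `P i`. -/
def recurrenceSeq {R ι : Type*} [CommSemiring R] [Fintype ι] (P : ι → R[X]) (r : ι → R) (n : ℕ) :
    R :=
  ∑ i, (P i).eval (n : R) * r i ^ n

section RecurrenceSeq

variable {ι : Type*} [Fintype ι]

theorem recurrenceSeq_map {R S : Type*} [CommSemiring R] [CommSemiring S] (φ : R →+* S)
    (P : ι → R[X]) (r : ι → R) (n : ℕ) :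
    recurrenceSeq (fun i ↦ (P i).map φ) (fun i ↦ φ (r i)) n = φ (recurrenceSeq P r n) := by
  simp only [recurrenceSeq, map_sum, map_mul, map_pow, ← map_natCast φ, eval_map_apply]

theorem recurrenceSeq_add_mul {R : Type*} [CommSemiring R] (P : ι → R[X]) (r : ι → R)
    (a M m : ℕ) :
    recurrenceSeq P r (a + M * m) =
      recurrenceSeq (fun i ↦ C (r i ^ a) * (P i).comp (C (a : R) + C (M : R) * X))
        (fun i ↦ r i ^ M) m := by
  refine Finset.sum_congr rfl fun i _ ↦ ?_
  simp only [eval_mul, eval_C, eval_comp, eval_add, eval_X, Nat.cast_add, Nat.cast_mul, pow_add,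
    pow_mul]
  ring

theorem recurrenceSeq_eq_image {R : Type*} [CommSemiring R] [DecidableEq R] (P : ι → R[X])
    (r : ι → R) :
    recurrenceSeq P r =
      recurrenceSeq (fun l : Finset.univ.image r ↦ ∑ i with r i = l, P i) Subtype.val := by
  funext n
  symm
  simp only [recurrenceSeq]
  rw [Finset.sum_coe_sort (Finset.univ.image r)
      fun l ↦ (∑ i with r i = l, P i).eval (n : R) * l ^ n,
    ← Finset.sum_fiberwise_of_maps_to fun i hi ↦ Finset.mem_image_of_mem r hi]
  refine Finset.sum_congr rfl fun l _ ↦ ?_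
  rw [eval_finsetSum, Finset.sum_mul]
  exact Finset.sum_congr rfl fun i hi ↦ by rw [(Finset.mem_filter.1 hi).2]

theorem recurrenceSeq_option_elim {R : Type*} [CommRing R] (P : ι → R[X]) (r : ι → R)
    (c : R) (n : ℕ) :
    recurrenceSeq (fun i : Option ι ↦ i.elim (-C c) P) (fun i ↦ i.elim 1 r) n =
      recurrenceSeq P r n - c := by
  simp only [recurrenceSeq, Fintype.sum_option, Option.elim, eval_neg, eval_C, one_pow, mul_one]
  ring

theorem funLeft_succ_sub_smul_one_pow_apply {R : Type*} [CommRing R] (l : R) (g : R → R) (d : ℕ) :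
    ((LinearMap.funLeft R R Nat.succ - l • (1 : Module.End R (ℕ → R))) ^ d)
      (fun n : ℕ ↦ g n * l ^ n) = fun n : ℕ ↦ (fwdDiff 1)^[d] g n * l ^ (n + d) := by
  induction d with
  | zero => rfl
  | succ d ih =>
    rw [pow_succ', Module.End.mul_apply, ih]
    funext n
    simp only [LinearMap.sub_apply, LinearMap.smul_apply, Module.End.one_apply, Pi.sub_apply,
      Pi.smul_apply, LinearMap.funLeft_apply, smul_eq_mul, Function.iterate_succ_apply', fwdDiff,
      Nat.succ_eq_add_one, Nat.cast_add, Nat.cast_one]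
    ring

theorem eval_mul_pow_mem_maxGenEigenspace {R : Type*} [CommRing R] (P : R[X]) (l : R) :
    (fun n : ℕ ↦ P.eval (n : R) * l ^ n) ∈
      Module.End.maxGenEigenspace (LinearMap.funLeft R R Nat.succ) l := by
  refine (Module.End.mem_maxGenEigenspace _ _ _).2 ⟨P.natDegree + 1, ?_⟩
  rw [funLeft_succ_sub_smul_one_pow_apply l (P.eval ·), P.fwdDiff_iter_degree_add_one_eq_zero]
  simp only [Pi.zero_apply, zero_mul]
  rfl

variable {K : Type*} [Field K] [CharZero K]

theorem coeff_eq_zero_of_recurrenceSeq_eq_zero {P : ι → K[X]} {r : ι → K} (hr₀ : ∀ i, r i ≠ 0)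
    (hr : Function.Injective r) (h : recurrenceSeq P r = 0) : P = 0 := by
  have hindep := (Module.End.independent_maxGenEigenspace (LinearMap.funLeft K K Nat.succ)).comp hr
  have hterm (i : ι) : (fun n : ℕ ↦ (P i).eval (n : K) * r i ^ n) = 0 := by
    refine (iSupIndep_iff_finsetSum_eq_zero_imp_eq_zero _).1 hindep Finset.univ _
      (fun i _ ↦ eval_mul_pow_mem_maxGenEigenspace (P i) (r i)) ?_ i (Finset.mem_univ i)
    rw [← h]
    funext n
    exact Finset.sum_apply _ _ _
  funext i
  refine eq_zero_of_infinite_isRoot _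
    ((Set.infinite_range_of_injective (Nat.cast_injective (R := K))).mono ?_)
  rintro _ ⟨n, rfl⟩
  exact (mul_eq_zero.1 (congr_fun (hterm i) n)).resolve_right (pow_ne_zero n (hr₀ i))

theorem coeff_eq_zero_of_recurrenceSeq_add_mul_eq_zero {P : ι → K[X]} {r : ι → K}
    (hr₀ : ∀ i, r i ≠ 0) (hr : Pairwise fun i j ↦ ¬IsOfFinOrder (r i / r j)) {a M : ℕ} (hM : 0 < M)
    (h : ∀ m, recurrenceSeq P r (a + M * m) = 0) : P = 0 := by
  have hinj : Function.Injective fun i ↦ r i ^ M := fun i j hij ↦ by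
    by_contra hne
    refine hr hne (isOfFinOrder_iff_pow_eq_one.2 ⟨M, hM, ?_⟩)
    rw [div_pow, div_eq_one_iff_eq (pow_ne_zero M (hr₀ j))]
    exact hij
  have hzero := coeff_eq_zero_of_recurrenceSeq_eq_zero (fun i ↦ pow_ne_zero M (hr₀ i)) hinj
    (funext fun m ↦ (recurrenceSeq_add_mul P r a M m).symm.trans (h m))
  funext i
  have hcomp := (mul_eq_zero.1 (congr_fun hzero i)).resolve_left
    (C_ne_zero.2 (pow_ne_zero a (hr₀ i)))
  refine (comp_eq_zero_iff.1 hcomp).resolve_right fun hconst ↦ ?_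
  have hM₀ : (M : K) = 0 := by simpa using congr_arg (coeff · 1) hconst.2
  exact hM.ne' (Nat.cast_eq_zero.1 hM₀)

end RecurrenceSeq

theorem exists_infinite_setOf_add_mul_mem {s : Set ℕ} (hs : s.Infinite) {M : ℕ} (hM : 0 < M) :
    ∃ a, {m | a + M * m ∈ s}.Infinite := by
  by_contra! hfin
  refine hs (((Set.finite_lt_nat M).biUnion fun a _ ↦ (hfin a).image (a + M * ·)).subset ?_)
  intro n hn
  refine Set.mem_biUnion (Nat.mod_lt n hM) ⟨n / M, ?_, Nat.mod_add_div n M⟩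
  rwa [← Nat.mod_add_div n M] at hn

section PadicZeros

variable {ι : Type*} [Fintype ι]

-- Close to `1` the powers `z ^ n` depend analytically on `n`.
theorem discInterpolable_recurrenceSeq {p : ℕ} [Fact p.Prime] {L : Type*} [NormedField L]
    [NormedAlgebra ℚ_[p] L] [IsUltrametricDist L] (P : ι → L[X]) {r : ι → L}
    (hr : ∀ i, ‖r i - 1‖ ≤ (p : ℝ)⁻¹ ^ 2) : DiscInterpolable p (recurrenceSeq P r) := by
  have : CharZero L := charZero_of_injective_algebraMap (algebraMap ℚ_[p] L).injective
  have hp : (1 : ℝ) ≤ p := mod_cast (Fact.out : p.Prime).one_lt.le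
  have hsum : recurrenceSeq P r =
      ∑ i, (fun n : ℕ ↦ (P i).eval (n : L)) * fun n ↦ (1 + (r i - 1)) ^ n := by
    funext n
    simp only [recurrenceSeq, Finset.sum_apply, Pi.mul_apply, add_sub_cancel]
  rw [hsum]
  exact .sum (zero_le_one.trans hp) _ fun i _ ↦ .mul (zero_lt_one.trans_le hp) (.eval_natCast _)
    (.one_add_pow hp (norm_pow_div_factorial_mul_pow_le_one (hr i)))

theorem coeff_eq_zero_of_infinite_zeros_of_norm_eq_one (p : ℕ) [Fact p.Prime] {L : Type*}
    [NormedField L] [NormedAlgebra ℚ_[p] L] [IsUltrametricDist L] [Algebra.IsAlgebraic ℚ_[p] L]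
    {P : ι → L[X]} {r : ι → L} (hr₁ : ∀ i, ‖r i‖ = 1)
    (hr : Pairwise fun i j ↦ ¬IsOfFinOrder (r i / r j))
    (hinf : {n | recurrenceSeq P r n = 0}.Infinite) : P = 0 := by
  have : CharZero L := charZero_of_injective_algebraMap (algebraMap ℚ_[p] L).injective
  have hp : 1 < p := (Fact.out : p.Prime).one_lt
  obtain ⟨M, hM, hrM⟩ := exists_pow_sub_one_lt ℚ_[p] hr₁ (ε := (p : ℝ)⁻¹ ^ 2) (by positivity)
  obtain ⟨a, ha⟩ := exists_infinite_setOf_add_mul_mem hinf hM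
  refine coeff_eq_zero_of_recurrenceSeq_add_mul_eq_zero (a := a)
    (fun i ↦ norm_ne_zero_iff.1 ((hr₁ i).trans_ne one_ne_zero)) hr hM fun m ↦ ?_
  have hzero := (discInterpolable_recurrenceSeq
    (fun i ↦ C (r i ^ a) * (P i).comp (C (a : L) + C (M : L) * X))
    fun i ↦ (hrM i).le).eq_zero_of_infinite (mod_cast hp)
    (ha.mono fun m hm ↦ (recurrenceSeq_add_mul P r a M m).symm.trans hm)
  rw [recurrenceSeq_add_mul]
  exact congr_fun hzero m

end PadicZeros

section UltrametricSpecialization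

variable {L ι : Type*} [NormedField L] [IsUltrametricDist L]

theorem norm_le_one_of_isIntegral {A : Type*} [CommRing A] [Algebra A L]
    (hA : ∀ a : A, ‖algebraMap A L a‖ ≤ 1) {x : L} (hx : IsIntegral A x) : ‖x‖ ≤ 1 := by
  let v : Valuation L NNReal := NormedField.valuation
  let f : A →+* v.integer := (algebraMap A L).codRestrict v.integer hA
  obtain ⟨q, hq, hqx⟩ := hx
  exact (Valuation.integer.integers v).mem_of_integral
    ⟨q.map f, hq.map f, by rw [eval₂_map]; exact hqx⟩

theorem norm_aeval_int_le_one {τ : ι → L} (hτ : ∀ i, ‖τ i‖ ≤ 1) (g : MvPolynomial ι ℤ) :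
    ‖MvPolynomial.aeval τ g‖ ≤ 1 := by
  induction g using MvPolynomial.induction_on with
  | C m =>
    rw [MvPolynomial.aeval_C, algebraMap_int_eq, eq_intCast]
    exact IsUltrametricDist.norm_intCast_le_one L m
  | add g h hg hh =>
    rw [map_add]
    exact (IsUltrametricDist.norm_add_le_max _ _).trans (max_le hg hh)
  | mul_X g i hg =>
    rw [map_mul, MvPolynomial.aeval_X, norm_mul]
    exact mul_le_one₀ hg (norm_nonneg _) (hτ i)

theorem norm_aeval_int_sub_lt_one {τ σ : ι → L} (hτ : ∀ i, ‖τ i‖ ≤ 1) (hσ : ∀ i, ‖σ i‖ ≤ 1)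
    (h : ∀ i, ‖τ i - σ i‖ < 1) (g : MvPolynomial ι ℤ) :
    ‖MvPolynomial.aeval τ g - MvPolynomial.aeval σ g‖ < 1 := by
  induction g using MvPolynomial.induction_on with
  | C m => simp only [MvPolynomial.aeval_C, sub_self, norm_zero, zero_lt_one]
  | add g g' hg hg' =>
    rw [map_add, map_add, add_sub_add_comm]
    exact (IsUltrametricDist.norm_add_le_max _ _).trans_lt (max_lt hg hg')
  | mul_X g i hg =>
    have hsplit : MvPolynomial.aeval τ (g * .X i) - MvPolynomial.aeval σ (g * .X i) =
        (MvPolynomial.aeval τ g - MvPolynomial.aeval σ g) * τ i +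
          MvPolynomial.aeval σ g * (τ i - σ i) := by
      simp only [map_mul, MvPolynomial.aeval_X]
      ring
    rw [hsplit]
    refine (IsUltrametricDist.norm_add_le_max _ _).trans_lt (max_lt ?_ ?_) <;> rw [norm_mul]
    · exact mul_lt_one_of_nonneg_of_lt_one_left (norm_nonneg _) hg (hτ i)
    · exact mul_lt_one_of_nonneg_of_lt_one_right (norm_aeval_int_le_one hσ g) (norm_nonneg _) (h i)

theorem norm_aeval_int_eq_one {τ : ι → L} {a : ι → ℤ} (h : ∀ i, ‖τ i - a i‖ < 1)
    (hτ : ∀ i, ‖τ i‖ ≤ 1) {g : MvPolynomial ι ℤ} (hg : ‖(MvPolynomial.eval a g : L)‖ = 1) :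
    ‖MvPolynomial.aeval τ g‖ = 1 := by
  have hclose := norm_aeval_int_sub_lt_one hτ
    (fun i ↦ IsUltrametricDist.norm_intCast_le_one L (a i)) h g
  have ha : MvPolynomial.aeval (fun i ↦ (a i : L)) g = (MvPolynomial.eval a g : L) :=
    MvPolynomial.aeval_algebraMap_apply L a g
  rw [ha, sub_eq_add_neg] at hclose
  rw [← hg, ← norm_neg (MvPolynomial.eval a g : L)] at hclose ⊢
  exact IsUltrametricDist.norm_eq_of_add_norm_lt_max (hclose.trans_le (le_max_right _ _))

end UltrametricSpecialization

section PadicEmbedding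

open Cardinal

universe u v

theorem exists_algebraicIndependent_int {K : Type u} {ι : Type v} [Field K] [CharZero K]
    [IsAlgClosed K] (hK : ℵ₀ < #K) (hι : lift.{u} #ι ≤ lift.{v} #K) :
    ∃ σ : ι → K, AlgebraicIndependent ℤ σ := by
  obtain ⟨t, ht⟩ := exists_isTranscendenceBasis ℤ K
  have hcard := IsAlgClosed.cardinal_eq_cardinal_transcendence_basis_of_aleph0_lt _ ht
    mk_le_aleph0 hK
  rw [lift_inj] at hcard
  rw [hcard, lift_mk_le'] at hι
  obtain ⟨e⟩ := hι
  exact ⟨fun i ↦ e i, ht.1.comp e e.injective⟩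

theorem exists_algebraicIndependent_norm_sub_lt_one (p : ℕ) [Fact p.Prime] {L ι : Type*}
    [NormedField L] [NormedAlgebra ℚ_[p] L] {σ : ι → L} (hσ : AlgebraicIndependent ℤ σ)
    (a : ι → ℤ) : ∃ τ : ι → L, AlgebraicIndependent ℤ τ ∧ ∀ i, ‖τ i - a i‖ < 1 := by
  have hp : ‖(p : L)‖ < 1 := by
    rw [← map_natCast (algebraMap ℚ_[p] L), norm_algebraMap']
    exact Padic.norm_p_lt_one
  have hsmall (i : ι) : ∃ k : ℕ, ‖(p : L) ^ k * σ i‖ < 1 := by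
    have h := ((tendsto_pow_atTop_nhds_zero_of_norm_lt_one hp).mul_const (σ i)).norm
    rw [zero_mul, norm_zero] at h
    exact (h.eventually_lt_const zero_lt_one).exists
  choose k hk using hsmall
  refine ⟨fun i ↦ aeval (σ i) (C ((p : ℤ) ^ k i) * X + C (a i)),
    hσ.polynomial_aeval_of_transcendental fun i ↦ ?_, fun i ↦ ?_⟩
  · have hpk : (p : ℤ) ^ k i ≠ 0 :=
      pow_ne_zero _ (Nat.cast_ne_zero.2 (Fact.out : p.Prime).ne_zero)
    refine transcendental _ ?_ ?_
    · rw [natDegree_linear hpk]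
      exact one_ne_zero
    · rw [leadingCoeff_linear hpk]
      exact mem_nonZeroDivisors_of_ne_zero hpk
  · simpa using hk i

theorem exists_prime_not_dvd {m : ℤ} (hm : m ≠ 0) : ∃ p : ℕ, p.Prime ∧ ¬(p : ℤ) ∣ m := by
  obtain ⟨p, hpm, hp⟩ := Nat.exists_infinite_primes (m.natAbs + 1)
  refine ⟨p, hp, fun hdvd ↦ ?_⟩
  exact (Nat.le_of_dvd (Int.natAbs_pos.2 hm) (Int.natCast_dvd.1 hdvd)).not_gt hpm

-- The coordinates are perturbations of an integer point `a` with `g(a) ≠ 0`, for `p ∤ g(a)`.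
theorem exists_algebraicIndependent_norm_aeval_eq_one {ι : Type v} (hι : #ι ≤ 𝔠)
    {g : MvPolynomial ι ℤ} (hg : g ≠ 0) :
    ∃ (p : ℕ) (_ : Fact p.Prime) (τ : ι → PadicAlgCl p), AlgebraicIndependent ℤ τ ∧
      (∀ i, ‖τ i‖ ≤ 1) ∧ ‖MvPolynomial.aeval τ g‖ = 1 := by
  obtain ⟨a, ha⟩ : ∃ a : ι → ℤ, MvPolynomial.eval a g ≠ 0 := by
    by_contra! h
    exact hg (MvPolynomial.funext fun a ↦ by rw [h a, map_zero])
  obtain ⟨p, hp, hpa⟩ := exists_prime_not_dvd ha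
  have : Fact p.Prime := ⟨hp⟩
  have hcard : 𝔠 ≤ #(PadicAlgCl p) := continuum_le_cardinal_of_module ℚ_[p] _
  have hιL : lift.{0} #ι ≤ lift.{v} #(PadicAlgCl p) :=
    (lift_le_continuum.2 hι).trans (continuum_le_lift.2 hcard)
  obtain ⟨σ, hσ⟩ := exists_algebraicIndependent_int (aleph0_lt_continuum.trans_le hcard) hιL
  obtain ⟨τ, hτ, hτa⟩ := exists_algebraicIndependent_norm_sub_lt_one p hσ a
  have hτ₁ (i : ι) : ‖τ i‖ ≤ 1 := by
    rw [← sub_add_cancel (τ i) (a i)]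
    exact (IsUltrametricDist.norm_add_le_max _ _).trans
      (max_le (hτa i).le (IsUltrametricDist.norm_intCast_le_one _ (a i)))
  have hga : ‖(MvPolynomial.eval a g : PadicAlgCl p)‖ = 1 := by
    rw [← map_intCast (algebraMap ℚ_[p] (PadicAlgCl p)), norm_algebraMap',
      Padic.norm_intCast_eq_one_iff, isCoprime_comm]
    exact (Nat.prime_iff_prime_int.1 hp).coprime_iff_not_dvd.2 hpa
  exact ⟨p, this, τ, hτ, hτ₁, norm_aeval_int_eq_one hτa hτ₁ hga⟩

theorem exists_ringHom_norm_le_one {A K L : Type*} [CommRing A] [IsDomain A] [Field K] [Algebra A K]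
    [FaithfulSMul A K] [Algebra.IsAlgebraic A K] [NormedField L] [IsUltrametricDist L]
    [IsAlgClosed L] {ψ : A →+* L} (hinj : Function.Injective ψ) (hψ : ∀ a, ‖ψ a‖ ≤ 1) {y : A}
    (hy : ‖ψ y‖ = 1) : ∃ φ : K →+* L, ∀ x : K, IsIntegral A (y • x) → ‖φ x‖ ≤ 1 := by
  let _ : Algebra A L := ψ.toAlgebra
  have : FaithfulSMul A L := (faithfulSMul_iff_algebraMap_injective A L).2 hinj
  let φ : K →ₐ[A] L := IsAlgClosed.lift
  refine ⟨φ.toRingHom, fun x hx ↦ ?_⟩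
  have h : ‖φ (y • x)‖ ≤ 1 := norm_le_one_of_isIntegral hψ (hx.map φ)
  rwa [map_smul, Algebra.smul_def, norm_mul, show ‖algebraMap A L y‖ = 1 from hy, one_mul] at h

theorem exists_padic_embedding_norm_eq_one {K : Type*} [Field K] [CharZero K] (hK : #K ≤ 𝔠)
    {S : Finset K} (hS : 0 ∉ S) : ∃ (p : ℕ) (_ : Fact p.Prime) (φ : K →+* PadicAlgCl p),
      ∀ x ∈ S, ‖φ x‖ = 1 := by
  classical
  obtain ⟨t, ht⟩ := exists_isTranscendenceBasis ℤ K
  have := ht.isAlgebraic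
  obtain ⟨y, hy₀, hy⟩ := Algebra.IsAlgebraic.exists_integral_multiples
    (Algebra.adjoin ℤ (Set.range ((↑) : t → K))) (S ∪ S.image (·⁻¹))
  let e := ht.1.aevalEquiv.symm
  obtain ⟨p, hp, τ, hτ, hτ₁, hτy⟩ := exists_algebraicIndependent_norm_aeval_eq_one
    ((mk_set_le t).trans hK) ((map_ne_zero_iff e e.injective).2 hy₀)
  obtain ⟨φ, hφ⟩ := exists_ringHom_norm_le_one (K := K)
    (ψ := ((MvPolynomial.aeval τ).comp e.toAlgHom).toRingHom) (fun _ _ h ↦ e.injective (hτ h))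
    (fun a ↦ norm_aeval_int_le_one hτ₁ (e a)) hτy
  refine ⟨p, hp, φ, fun x hx ↦ le_antisymm (hφ x (hy x (Finset.mem_union_left _ hx))) ?_⟩
  have hinv := hφ x⁻¹ (hy _ (Finset.mem_union_right _ (Finset.mem_image_of_mem _ hx)))
  rw [map_inv₀, norm_inv] at hinv
  have hx₀ : x ≠ 0 := fun h ↦ hS (h ▸ hx)
  exact (inv_le_one₀ (norm_pos_iff.2 ((map_ne_zero φ).2 hx₀))).1 hinv

end PadicEmbedding

section InfiniteZeros

variable {ι K : Type*} [Fintype ι] [Field K]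

theorem isOfFinOrder_map_div_map_iff {L : Type*} [Field L] (φ : K →+* L) (x y : K) :
    IsOfFinOrder (φ x / φ y) ↔ IsOfFinOrder (x / y) := by
  rw [← map_div₀]
  exact Function.Injective.isOfFinOrder_iff (f := (φ : K →* L)) φ.injective

variable [CharZero K]

open Cardinal in
theorem coeff_eq_zero_of_infinite_zeros_of_mk_le_continuum (hK : #K ≤ 𝔠) {P : ι → K[X]} {r : ι → K}
    (hr₀ : ∀ i, r i ≠ 0) (hr : Pairwise fun i j ↦ ¬IsOfFinOrder (r i / r j))
    (hinf : {n | recurrenceSeq P r n = 0}.Infinite) : P = 0 := by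
  classical
  obtain ⟨p, hp, φ, hφ⟩ := exists_padic_embedding_norm_eq_one hK (S := Finset.univ.image r)
    (by simpa using hr₀)
  have hφP : (fun i ↦ (P i).map φ) = 0 := by
    refine coeff_eq_zero_of_infinite_zeros_of_norm_eq_one p (r := fun i ↦ φ (r i))
      (fun i ↦ hφ _ (Finset.mem_image_of_mem r (Finset.mem_univ i))) (fun i j hij h ↦ ?_)
      (hinf.mono fun n hn ↦ ?_)
    · exact hr hij ((isOfFinOrder_map_div_map_iff φ _ _).1 h)
    · exact (recurrenceSeq_map φ P r n).trans ((congr_arg φ hn).trans (map_zero φ))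
  funext i
  exact (Polynomial.map_eq_zero φ).1 (congr_fun hφP i)

-- The Lefschetz principle: `P` and `r` are defined over a countable subfield.
theorem coeff_eq_zero_of_infinite_zeros {P : ι → K[X]} {r : ι → K}
    (hr₀ : ∀ i, r i ≠ 0) (hr : Pairwise fun i j ↦ ¬IsOfFinOrder (r i / r j))
    (hinf : {n | recurrenceSeq P r n = 0}.Infinite) : P = 0 := by
  let S : Set K := Set.range r ∪ ⋃ i, (P i).coeffs
  let F : Subfield K := Subfield.closure S
  have hS : S.Finite := (Set.finite_range r).union
    (Set.finite_iUnion fun i ↦ (P i).coeffs.finite_toSet)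
  have hF : Cardinal.mk F ≤ Cardinal.continuum :=
    (Subfield.cardinalMk_closure_le_max S).trans
      (max_le (hS.lt_aleph0.le.trans Cardinal.aleph0_le_continuum) Cardinal.aleph0_le_continuum)
  have hP (i : ι) : ∃ Q : F[X], Q.map F.subtype = P i :=
    (mem_lifts _).1 ((lifts_iff_coeffs_subset_range _).2 fun x hx ↦
      ⟨⟨x, Subfield.subset_closure (.inr (Set.mem_iUnion.2 ⟨i, hx⟩))⟩, rfl⟩)
  choose Q hQ using hP
  let q (i : ι) : F := ⟨r i, Subfield.subset_closure (.inl ⟨i, rfl⟩)⟩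
  have hQ₀ : Q = 0 := by
    refine coeff_eq_zero_of_infinite_zeros_of_mk_le_continuum hF (r := q)
      (fun i hi ↦ hr₀ i (congr_arg Subtype.val hi)) (fun i j hij h ↦ ?_) (hinf.mono fun n hn ↦ ?_)
    · exact hr hij ((isOfFinOrder_map_div_map_iff F.subtype (q i) (q j)).2 h)
    · refine F.subtype.injective ?_
      rw [← recurrenceSeq_map, map_zero]
      simp only [hQ]
      exact hn
  funext i
  rw [← hQ i, hQ₀, Pi.zero_apply, Polynomial.map_zero, Pi.zero_apply]

theorem recurrenceSeq_eq_zero_of_infinite_zeros {P : ι → K[X]} {r : ι → K} (hr₀ : ∀ i, r i ≠ 0)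
    (hr : ∀ i j, IsOfFinOrder (r i / r j) → r i = r j)
    (hinf : {n | recurrenceSeq P r n = 0}.Infinite) : recurrenceSeq P r = 0 := by
  classical
  rw [recurrenceSeq_eq_image] at hinf ⊢
  rw [coeff_eq_zero_of_infinite_zeros ?_ ?_ hinf]
  · funext n
    simp [recurrenceSeq]
  · rintro ⟨l, hl⟩
    obtain ⟨i, -, rfl⟩ := Finset.mem_image.1 hl
    exact hr₀ i
  · rintro ⟨l, hl⟩ ⟨l', hl'⟩ hne h
    obtain ⟨i, -, rfl⟩ := Finset.mem_image.1 hl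
    obtain ⟨j, -, rfl⟩ := Finset.mem_image.1 hl'
    exact hne (Subtype.ext (hr i j h))

end InfiniteZeros

theorem stmt3_general {ι K : Type*} [Fintype ι] [Field K] [CharZero K] (P : ι → K[X]) (r : ι → K)
    (hr₀ : ∀ i, r i ≠ 0) (hr₁ : ∀ i, IsOfFinOrder (r i) → r i = 1)
    (hr : ∀ i j, IsOfFinOrder (r i / r j) → r i = r j) {c : K}
    (hinf : {n | recurrenceSeq P r n = c}.Infinite) (n : ℕ) : recurrenceSeq P r n = c := by
  have hzero : recurrenceSeq (fun i : Option ι ↦ i.elim (-C c) P) (fun i ↦ i.elim 1 r) = 0 := by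
    refine recurrenceSeq_eq_zero_of_infinite_zeros ?_ ?_ (hinf.mono fun n hn ↦ ?_)
    · rintro (_ | i)
      exacts [one_ne_zero, hr₀ i]
    · rintro (_ | i) (_ | j) h
      · rfl
      · exact (hr₁ j (by simpa [isOfFinOrder_iff_pow_eq_one] using h)).symm
      · exact hr₁ i (div_one (r i) ▸ h)
      · exact hr i j h
    · exact (recurrenceSeq_option_elim P r c n).trans (sub_eq_zero.2 hn)
  rw [← sub_eq_zero, ← recurrenceSeq_option_elim, hzero, Pi.zero_apply]

theorem stmt3 (s : ℕ) (P : Fin s → Polynomial ℂ) (r : Fin s → ℂ)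
    (hPne : ∀ i, P i ≠ 0) (hrne : ∀ i, r i ≠ 0) (hrinj : Function.Injective r)
    (hnd1 : ∀ i, IsRootOfUnity (r i) → r i = 1)
    (hnd2 : ∀ i j, i ≠ j → ¬ IsRootOfUnity (r i / r j))
    (u : ℕ → ℂ) (hu : ∀ n : ℕ, u n = ∑ i, (P i).eval (n : ℂ) * r i ^ n)
    (c : ℂ) (hinf : {n : ℕ | u n = c}.Infinite) :
    ∃ (N : ℕ) (d : ℂ), ∀ n ≥ N, u n = d := by
  obtain rfl : u = recurrenceSeq P r := funext hu
  refine ⟨0, c, fun n _ ↦ stmt3_general P r hrne (fun i h ↦ hnd1 i ?_) (fun i j h ↦ ?_) hinf n⟩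
  · exact isOfFinOrder_iff_pow_eq_one.1 h
  · by_contra hne
    exact hnd2 i j (fun hij ↦ hne (congr_arg r hij)) (isOfFinOrder_iff_pow_eq_one.1 h)
end
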